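/- Let K be a finite field of characteristic p and order q, and let d be an integer with gcd(d, q − 1) = 1. Suppose that the set {W_{K,d}(a) : a ∈ K^×} equals {0, A, −A} for some nonzero complex number A. Then d ≡ 1 (mod p − 1), |A| = p^k for some positive integer k, and, letting R denote the set of roots of the polynomial (x+1)^d − x^d − 1 in K, one has |A| = sqrt(|R|·q) and sqrt(q) < |A| < q. -/

import Mathlib

open scoped BigOperators Classical

/-- The canonical additive character of a finite field `K` of characteristic `p`:
`ψ_K(x) = exp(2πi · Tr_{K/F_p}(x) / p)`, where `Tr_{K/F_p}` is the absolute trace. -/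
noncomputable def canonicalAddChar (p : ℕ) [Fact p.Prime] (K : Type) [Field K] [Fintype K]
    [Algebra (ZMod p) K] (x : K) : ℂ :=
  Complex.exp (2 * Real.pi * Complex.I * ((Algebra.trace (ZMod p) K x).val : ℂ) / (p : ℂ))

/-- The Weil sum `W_{K,d}(a) = ∑_{x ∈ K} ψ_K(x^d + a·x)`. -/
noncomputable def weilSum (p : ℕ) [Fact p.Prime] (K : Type) [Field K] [Fintype K]
    [Algebra (ZMod p) K] (d : ℤ) (a : K) : ℂ :=
  ∑ x : K, canonicalAddChar p K (x ^ d + a * x)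

/-- The value set `{W_{K,d}(a) : a ∈ K^×}` of the Weil sum. -/
noncomputable def weilValues (p : ℕ) [Fact p.Prime] (K : Type) [Field K] [Fintype K]
    [Algebra (ZMod p) K] (d : ℤ) : Set ℂ :=
  {w : ℂ | ∃ a : K, a ≠ 0 ∧ weilSum p K d a = w}

/-- `d` is degenerate over a finite field of order `q` and characteristic `p` if
`d ≡ p^j (mod q − 1)` for some nonnegative integer `j`. -/
def IsDegenerate (p : ℕ) (q : ℕ) (d : ℤ) : Prop :=
  ∃ j : ℕ, d ≡ (p : ℤ) ^ j [ZMOD (q : ℤ) - 1]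

theorem ws_W1 {K : Type} [Field K] [Fintype K] (ψ : AddChar K ℂ) (hψ : ψ.IsPrimitive) (g : K → ℂ) (s y : K) (hs : s ≠ 0) :
    ∑ a : K, (∑ x : K, g x * ψ (s * a * x)) * ψ (-(s * a * y)) = Fintype.card K * g y := by
  have h : ∀ x : K, ∑ a : K, ψ (a * (s * (x - y))) = if x = y then (Fintype.card K : ℂ) else 0 := by
    intro x
    rw [AddChar.sum_mulShift _ hψ]
    simp [hs, sub_eq_zero]
  calc _ = ∑ a : K, ∑ x : K, g x * ψ (a * (s * (x - y))) := by
        refine Finset.sum_congr rfl fun a _ => ?_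
        rw [Finset.sum_mul]
        refine Finset.sum_congr rfl fun x _ => ?_
        rw [mul_assoc, ← AddChar.map_add_eq_mul]
        congr 2; ring
    _ = ∑ x : K, g x * ∑ a : K, ψ (a * (s * (x - y))) := by
        rw [Finset.sum_comm]; simp_rw [Finset.mul_sum]
    _ = _ := by simp [h, mul_comm]

/-- convolution power moments -/
theorem ws_mom {K : Type} [Field K] [Fintype K] (ψ : AddChar K ℂ) (hψ : ψ.IsPrimitive) (f : K → K)
    (hf0 : f 0 = 0) (hmul : ∀ x y, f (x * y) = f x * f y) (hneg : ∀ x, f (-x) = - f x)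
    (hbij : Function.Bijective f) (W : K → ℂ) (hW : ∀ a, W a = ∑ x, ψ (f x + a * x)) :
    W 0 = 0 ∧ ∑ a, W a = Fintype.card K ∧ ∑ a, W a ^ 2 = (Fintype.card K : ℂ) ^ 2 ∧
    ∑ a, W a ^ 3 = (Fintype.card K : ℂ) ^ 2 * (Finset.univ.filter fun x : K => f (x + 1) - f x - 1 = 0).card := by
  have hW' : ∀ a, W a = ∑ x, ψ (f x) * ψ (a * x) := by
    intro a; rw [hW]; simp [AddChar.map_add_eq_mul]
  have inv : ∀ y, ∑ a, W a * ψ (a * y) = Fintype.card K * ψ (f (-y)) := by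
    intro y
    have := ws_W1 ψ hψ (fun x => ψ (f x)) 1 (-y) one_ne_zero
    simp only [one_mul, mul_neg, neg_neg] at this
    rw [← this]; simp [hW']
  have ort : ∀ b : K, ∑ x, ψ (f x * b) = if b = 0 then (Fintype.card K : ℂ) else 0 := by
    intro b
    have h := AddChar.sum_mulShift b hψ
    rw [Nat.cast_ite, Nat.cast_zero] at h
    rw [← h]
    exact hbij.sum_comp (fun x => ψ (x * b))
  have hf1 : f 1 = 1 := by
    have := hmul 1 1
    have h1 : f 1 ≠ 0 := by
      intro h; exact one_ne_zero (hbij.1 (h.trans hf0.symm))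
    simp only [mul_one] at this
    exact (mul_eq_left₀ h1).1 this.symm
  have sq : ∀ y, ∑ a, W a ^ 2 * ψ (a * y) = Fintype.card K * ∑ x, ψ (f x - f (x + y)) := by
    intro y
    calc _ = ∑ a, ∑ x, ψ (f x) * (W a * ψ (a * (x + y))) := by
          refine Finset.sum_congr rfl fun a _ => ?_
          rw [pow_two, mul_assoc]; nth_rewrite 1 [hW' a]
          rw [Finset.sum_mul]
          refine Finset.sum_congr rfl fun x _ => ?_
          rw [mul_add, AddChar.map_add_eq_mul]; ring
      _ = ∑ x, ψ (f x) * ∑ a, (W a * ψ (a * (x + y))) := by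
          rw [Finset.sum_comm]; simp_rw [Finset.mul_sum]
      _ = _ := by
          rw [Finset.mul_sum]
          refine Finset.sum_congr rfl fun x _ => ?_
          rw [inv, hneg, sub_eq_add_neg, AddChar.map_add_eq_mul]; ring
  refine ⟨?_, ?_, ?_, ?_⟩
  · have := ort 1
    rw [hW]; simpa using this
  · have := inv 0
    simpa [hf0] using this
  · have := sq 0
    simpa [pow_two] using this
  · calc ∑ a, W a ^ 3 = ∑ a, ∑ y, ψ (f y) * (W a ^ 2 * ψ (a * y)) := by
          refine Finset.sum_congr rfl fun a _ => ?_
          rw [pow_succ]; nth_rewrite 2 [hW' a]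
          rw [Finset.mul_sum]
          refine Finset.sum_congr rfl fun x _ => ?_
          ring
      _ = ∑ y, ψ (f y) * ∑ a, (W a ^ 2 * ψ (a * y)) := by
          rw [Finset.sum_comm]; simp_rw [Finset.mul_sum]
      _ = Fintype.card K * ∑ y, ∑ x, ψ (f y + f x - f (x + y)) := by
          rw [Finset.mul_sum]
          refine Finset.sum_congr rfl fun y _ => ?_
          rw [sq, mul_left_comm, Finset.mul_sum]
          congr 1
          refine Finset.sum_congr rfl fun x _ => ?_
          rw [← AddChar.map_add_eq_mul, add_sub_assoc]
      _ = Fintype.card K * ∑ y, ∑ x, ψ (f y * (1 + f x - f (x + 1))) := by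
          congr 1
          refine Finset.sum_congr rfl fun y _ => ?_
          by_cases hy : y = 0
          · subst hy; simp [hf0]
          · rw [← Equiv.sum_comp (Equiv.mulLeft₀ y hy)]
            refine Finset.sum_congr rfl fun x _ => ?_
            change ψ (f y + f (y * x) - f (y * x + y)) = _
            have : y * x + y = y * (x + 1) := by ring
            rw [this, hmul, hmul]; congr 1; ring
      _ = Fintype.card K * ∑ x : K, if 1 + f x - f (x + 1) = 0 then (Fintype.card K : ℂ) else 0 := by
          rw [Finset.sum_comm]; simp_rw [ort]
      _ = _ := by
          rw [Finset.sum_ite]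
          have : (Finset.univ.filter fun x : K => 1 + f x - f (x + 1) = 0) = (Finset.univ.filter fun x : K => f (x + 1) - f x - 1 = 0) := by
            ext x; simp only [Finset.mem_filter, Finset.mem_univ, true_and]
            constructor <;> intro h <;> linear_combination -h
          simp [this]; ring


noncomputable def wsPsi (p : ℕ) [Fact p.Prime] (K : Type) [Field K] [Fintype K]
    [Algebra (ZMod p) K] : AddChar K ℂ :=
  (ZMod.stdAddChar (N := p)).compAddMonoidHom (Algebra.trace (ZMod p) K).toAddMonoidHom

theorem wsPsi_apply (p : ℕ) [Fact p.Prime] (K : Type) [Field K] [Fintype K]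
    [Algebra (ZMod p) K] (x : K) : wsPsi p K x = ZMod.stdAddChar (Algebra.trace (ZMod p) K x) := rfl

theorem canon_eq (p : ℕ) [Fact p.Prime] (K : Type) [Field K] [Fintype K]
    [Algebra (ZMod p) K] (x : K) : canonicalAddChar p K x = wsPsi p K x := by
  rw [wsPsi_apply, canonicalAddChar]
  have := ZMod.stdAddChar_coe (N := p) ((Algebra.trace (ZMod p) K x).val : ℤ)
  simpa using this.symm

theorem canon_pow (p : ℕ) [Fact p.Prime] (K : Type) [Field K] [Fintype K]
    [Algebra (ZMod p) K] (x : K) : wsPsi p K x =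
      Complex.exp (2 * Real.pi * Complex.I / p) ^ (Algebra.trace (ZMod p) K x).val := by
  rw [← canon_eq, canonicalAddChar, ← Complex.exp_nat_mul]
  congr 1; ring

theorem wsPsi_prim (p : ℕ) [Fact p.Prime] (K : Type) [Field K] [Fintype K] [CharP K p]
    [Algebra (ZMod p) K] : (wsPsi p K).IsPrimitive := by
  apply AddChar.IsPrimitive.of_ne_one
  obtain rfl := ringChar.eq K p
  obtain ⟨b, hb⟩ := FiniteField.trace_to_zmod_nondegenerate K (one_ne_zero)
  rw [one_mul] at hb
  refine AddChar.ne_one_iff.2 ⟨b, fun h => hb ?_⟩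
  rw [wsPsi_apply] at h
  apply ZMod.injective_stdAddChar
  rw [h, AddChar.map_zero_eq_one]

theorem ws_integral (p : ℕ) [Fact p.Prime] (K : Type) [Field K] [Fintype K]
    [Algebra (ZMod p) K] (g : K → K) : IsIntegral ℤ (∑ x, wsPsi p K (g x)) := by
  refine IsIntegral.sum _ fun x _ => ?_
  rw [canon_pow]
  have hp : p ≠ 0 := (Fact.out : p.Prime).ne_zero
  exact ((Complex.isPrimitiveRoot_exp p hp).isIntegral (Nat.pos_of_ne_zero hp)).pow _

theorem ws_galois (p : ℕ) [Fact p.Prime] (K : Type) [Field K] [Fintype K]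
    [Algebra (ZMod p) K] (g : K → K) (n : ℤ) (h : ∑ x, wsPsi p K (g x) = n) (t : ℕ)
    (ht : t.Coprime p) : ∑ x, wsPsi p K (t * g x) = n := by
  have hp : p ≠ 0 := (Fact.out : p.Prime).ne_zero
  have hζ := Complex.isPrimitiveRoot_exp p hp
  set ζ := Complex.exp (2 * Real.pi * Complex.I / p)
  let P : Polynomial ℤ := ∑ x, Polynomial.X ^ (Algebra.trace (ZMod p) K (g x)).val - Polynomial.C n
  have hP : Polynomial.aeval ζ P = 0 := by
    simp only [P, map_sub, map_sum, map_pow, Polynomial.aeval_X, Polynomial.aeval_C]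
    simp only [canon_pow] at h
    rw [sub_eq_zero]
    exact h
  have hd : minpoly ℤ ζ ∣ P :=
    minpoly.isIntegrallyClosed_dvd (hζ.isIntegral (Nat.pos_of_ne_zero hp)) hP
  rw [hζ.minpoly_eq_pow_coprime ht] at hd
  obtain ⟨Q, hQ⟩ := hd
  have h2 : Polynomial.aeval (ζ ^ t) P = 0 := by
    rw [hQ, map_mul, minpoly.aeval, zero_mul]
  simp only [P, map_sub, map_sum, map_pow, Polynomial.aeval_X, Polynomial.aeval_C] at h2
  rw [sub_eq_zero] at h2
  have h3 : ∀ x, wsPsi p K (t * x) = (ζ ^ t) ^ (Algebra.trace (ZMod p) K x).val := by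
    intro x
    rw [← nsmul_eq_mul, AddChar.map_nsmul_eq_pow, canon_pow, pow_right_comm]
  simp only [h3]
  rw [h2]; simp

theorem ws_tpow (p : ℕ) [Fact p.Prime] (K : Type) [Field K] [Fintype K] [CharP K p]
    [Algebra (ZMod p) K] (f : K → K)
    (hmul : ∀ x y, f (x * y) = f x * f y)
    (hbij : Function.Bijective f)
    (hint : ∀ a, ∃ n : ℤ, ∑ x, wsPsi p K (f x + a * x) = n) (t : ℕ) (ht : t.Coprime p) :
    f (t : K) = t := by
  have hψ := wsPsi_prim p K
  have ht0 : (t : K) ≠ 0 := by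
    intro h
    rw [CharP.cast_eq_zero_iff K p] at h
    exact (Fact.out : p.Prime).one_lt.ne' (Nat.Coprime.eq_one_of_dvd ht.symm h)
  have key : ∀ y, wsPsi p K (t * f y) = wsPsi p K (f (t * y)) := by
    intro y
    have h1 := ws_W1 _ hψ (fun x => wsPsi p K (t * f x)) t y ht0
    have h2 := ws_W1 _ hψ (fun x => wsPsi p K (f x)) 1 (t * y) one_ne_zero
    have hq : (Fintype.card K : ℂ) ≠ 0 := by simp
    apply mul_left_cancel₀ hq
    rw [← h1, ← h2]
    refine Finset.sum_congr rfl fun a _ => ?_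
    congr 1
    · obtain ⟨n, hn⟩ := hint a
      have hg := ws_galois p K (fun x => f x + a * x) n hn t ht
      simp only [← AddChar.map_add_eq_mul]
      simp only [one_mul]
      rw [hn, ← hg]
      refine Finset.sum_congr rfl fun x _ => ?_
      congr 1; ring
    · congr 1; ring
  by_contra hne
  have h3 := AddChar.sum_mulShift ((t : K) - f t) hψ
  rw [if_neg (by intro h; exact hne (sub_eq_zero.1 h).symm)] at h3
  have h4 : ∀ x : K, wsPsi p K (x * ((t : K) - f t)) = 1 := by
    intro x
    obtain ⟨y, rfl⟩ := hbij.2 x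
    have e : f y * ((t : K) - f t) = t * f y - f (t * y) := by rw [hmul]; ring
    rw [e, AddChar.map_sub_eq_div, key, div_self]
    exact (AddChar.val_isUnit _ _).ne_zero
  simp [h4] at h3

theorem ws_arith (p : ℕ) [Fact p.Prime] (K : Type) [Field K] [Fintype K] [CharP K p]
    (W : K → ℂ) (A : ℂ) (hA : A ≠ 0) (hint : IsIntegral ℤ A)
    (h0 : W 0 = 0) (hv : ∀ a, W a = 0 ∨ W a = A ∨ W a = -A) (a₁ a₂ : K) (ha₁ : W a₁ = A)
    (ha₂ : W a₂ = -A) (R : ℕ)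
    (m1 : ∑ a, W a = Fintype.card K) (m2 : ∑ a, W a ^ 2 = (Fintype.card K : ℂ) ^ 2)
    (m3 : ∑ a, W a ^ 3 = (Fintype.card K : ℂ) ^ 2 * R) :
    (∀ a, ∃ n : ℤ, W a = n) ∧ (∃ k : ℕ, 0 < k ∧ ‖A‖ = (p : ℝ) ^ k) ∧
    ‖A‖ = Real.sqrt (R * Fintype.card K) ∧
    Real.sqrt (Fintype.card K) < ‖A‖ ∧
    ‖A‖ < Fintype.card K := by
  have hp : p.Prime := Fact.out
  have hq0 : 0 < Fintype.card K := Fintype.card_pos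
  have hq : (Fintype.card K : ℂ) ≠ 0 := by simp
  have hne : A ≠ -A := by
    intro h; apply hA; linear_combination h / 2
  have : ∀ a, ∃ e : ℤ, W a = e * A := by
    intro a
    rcases hv a with h | h | h
    · exact ⟨0, by simp [h]⟩
    · exact ⟨1, by simp [h]⟩
    · exact ⟨-1, by simp [h]⟩
  choose e he using this
  obtain ⟨m, hm⟩ : ∃ m : ℤ, (m : ℂ) * A = Fintype.card K := by
    refine ⟨∑ a, e a, ?_⟩
    rw [← m1, Int.cast_sum, Finset.sum_mul]
    exact Finset.sum_congr rfl fun a _ => (he a).symm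
  have hm0 : (m : ℂ) ≠ 0 := by
    intro h; rw [h, zero_mul] at hm; exact hq hm.symm
  obtain ⟨n, rfl⟩ : ∃ n : ℤ, A = n := by
    have hAr : A = algebraMap ℚ ℂ ((Fintype.card K : ℚ) / m) := by
      simp only [eq_ratCast]; push_cast; rw [eq_div_iff hm0, ← hm, mul_comm]
    rw [hAr, isIntegral_algebraMap_iff (algebraMap ℚ ℂ).injective,
      IsIntegrallyClosed.isIntegral_iff] at hint
    obtain ⟨n, hn⟩ := hint
    refine ⟨n, ?_⟩
    rw [hAr, ← hn]; simp
  have hn0 : n ≠ 0 := by rintro rfl; simp at hA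
  set S := Finset.univ.filter fun a => W a ≠ 0 with hS
  have h2 : (n : ℂ) ^ 2 * S.card = (Fintype.card K : ℂ) ^ 2 := by
    rw [← m2]
    have : ∀ a, W a ^ 2 = if W a ≠ 0 then (n : ℂ) ^ 2 else 0 := by
      intro a
      by_cases ha : W a = 0
      · simp [ha]
      · rw [if_pos ha]
        rcases hv a with h | h | h
        · exact absurd h ha
        · rw [h]
        · rw [h, neg_sq]
    rw [Finset.sum_congr rfl fun a _ => this a, ← Finset.sum_filter, Finset.sum_const, nsmul_eq_mul,
      mul_comm]
  have hR : (n : ℂ) ^ 2 = R * Fintype.card K := by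
    have : (n : ℂ) ^ 2 * Fintype.card K = (Fintype.card K : ℂ) ^ 2 * R := by
      rw [← m3, ← m1, Finset.mul_sum]
      refine Finset.sum_congr rfl fun a _ => ?_
      rcases hv a with h | h | h <;> rw [h] <;> ring
    apply mul_right_cancel₀ hq
    rw [this]; ring
  have h2' : n.natAbs ^ 2 * S.card = Fintype.card K ^ 2 := by
    zify; rw [sq_abs]; exact_mod_cast h2
  have hR' : n.natAbs ^ 2 = R * Fintype.card K := by
    zify; rw [sq_abs]; exact_mod_cast hR
  have hm' : m.natAbs * n.natAbs = Fintype.card K := by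
    rw [← Int.natAbs_mul]
    have : m * n = (Fintype.card K : ℤ) := by exact_mod_cast hm
    rw [this]; simp
  have hS1 : S.card < Fintype.card K := by
    refine Finset.card_lt_univ_of_notMem (x := 0) ?_
    simp [hS, h0]
  have hS2 : 1 < S.card := by
    rw [Finset.one_lt_card]
    refine ⟨a₁, ?_, a₂, ?_, ?_⟩
    · simp [hS, ha₁, hn0]
    · simp [hS, ha₂, hn0]
    · rintro rfl; exact hne (ha₁.symm.trans ha₂)
  have hnorm : ‖(n : ℂ)‖ = (n.natAbs : ℝ) := by
    rw [Complex.norm_intCast, Nat.cast_natAbs, Int.cast_abs]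
  have hnpos : 0 < n.natAbs := Int.natAbs_pos.2 hn0
  rw [hnorm]
  have L1 : Fintype.card K < n.natAbs ^ 2 := by
    by_contra hc
    push Not at hc
    nlinarith
  have L2 : n.natAbs < Fintype.card K := by
    by_contra hc
    push Not at hc
    nlinarith
  refine ⟨fun a => ⟨e a * n, by rw [he]; simp⟩, ?_, ?_, ?_, by exact_mod_cast L2⟩
  · obtain ⟨j, _, hj⟩ := FiniteField.card K p
    have hdvd : n.natAbs ∣ p ^ (j : ℕ) := by
      rw [← hj, ← hm']; exact dvd_mul_left _ _
    obtain ⟨k, -, hk⟩ := (Nat.dvd_prime_pow hp).1 hdvd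
    refine ⟨k, ?_, by rw [hk]; simp⟩
    rcases Nat.eq_zero_or_pos k with rfl | h
    · rw [hk] at L1; simp at L1
    · exact h
  · symm
    rw [Real.sqrt_eq_iff_eq_sq (by positivity) (by positivity)]
    exact_mod_cast hR'.symm
  · rw [Real.sqrt_lt' (by exact_mod_cast hnpos)]
    exact_mod_cast L1

theorem stmt2 (p : ℕ) [Fact p.Prime] (K : Type) [Field K] [Fintype K] [CharP K p]
    [Algebra (ZMod p) K]
    (d : ℤ) (hd : Int.gcd d ((Fintype.card K : ℤ) - 1) = 1)
    (A : ℂ) (hA : A ≠ 0)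
    (hval : weilValues p K d = {0, A, -A}) :
    d ≡ 1 [ZMOD (p : ℤ) - 1] ∧
    (∃ k : ℕ, 0 < k ∧ ‖A‖ = (p : ℝ) ^ k) ∧
    ‖A‖ =
      Real.sqrt (({x : K | (x + 1) ^ d - x ^ d - 1 = 0} : Set K).ncard * Fintype.card K) ∧
    Real.sqrt (Fintype.card K) < ‖A‖ ∧
    ‖A‖ < Fintype.card K := by
  have hp : p.Prime := Fact.out
  set q := Fintype.card K with hq
  have hmem : ∀ w, w ∈ weilValues p K d ↔ w = 0 ∨ w = A ∨ w = -A := by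
    intro w; rw [hval]; simp
  obtain ⟨a₀, ha₀, hw₀⟩ := (hmem 0).2 (Or.inl rfl)
  obtain ⟨a₁, ha₁, hw₁⟩ := (hmem A).2 (Or.inr (Or.inl rfl))
  obtain ⟨a₂, ha₂, hw₂⟩ := (hmem (-A)).2 (Or.inr (Or.inr rfl))
  have hne : A ≠ -A := by
    intro h; apply hA; linear_combination h / 2
  have hq3 : 3 ≤ q := by
    have h1 : a₁ ≠ a₂ := by rintro rfl; exact hne (hw₁.symm.trans hw₂)
    have : Finset.card {0, a₁, a₂} ≤ q := Finset.card_le_univ _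
    rwa [Finset.card_eq_three.2 ⟨0, a₁, a₂, ha₁.symm, ha₂.symm, h1, rfl⟩] at this
  have hd0 : d ≠ 0 := by
    rintro rfl
    rw [Int.gcd_zero_left] at hd; omega
  obtain ⟨u, v, huv⟩ : ∃ u v : ℤ, d * u + ((q : ℤ) - 1) * v = 1 := by
    refine ⟨Int.gcdA d (q - 1), Int.gcdB d (q - 1), ?_⟩
    rw [← Int.gcd_eq_gcd_ab, hd]; simp
  have hmul : ∀ x y : K, (x * y) ^ d = x ^ d * y ^ d := fun x y => mul_zpow x y d
  have hf0 : (0 : K) ^ d = 0 := zero_zpow d hd0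
  have hfrob : ∀ x : K, x ≠ 0 → x ^ ((q : ℤ) - 1) = 1 := by
    intro x hx
    have h := FiniteField.pow_card_sub_one_eq_one x hx
    have e : ((q : ℤ) - 1) = ((q - 1 : ℕ) : ℤ) := by omega
    rw [e, zpow_natCast]; exact h
  have hinv : ∀ x : K, x ≠ 0 → (x ^ d) ^ u = x := by
    intro x hx
    have : x ^ (d * u + ((q : ℤ) - 1) * v) = x := by rw [huv, zpow_one]
    rwa [zpow_add₀ hx, zpow_mul, zpow_mul, hfrob x hx, one_zpow, mul_one] at this
  have hbij : Function.Bijective (fun x : K => x ^ d) := by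
    apply Finite.injective_iff_bijective.1
    intro x y hxy
    change x ^ d = y ^ d at hxy
    by_cases hx : x = 0
    · subst hx
      rw [hf0] at hxy
      exact ((zpow_eq_zero_iff hd0).1 hxy.symm).symm
    · have hy : y ≠ 0 := by
        rintro rfl
        rw [hf0, zpow_eq_zero_iff hd0] at hxy
        exact hx hxy
      rw [← hinv x hx, ← hinv y hy, hxy]
  have hneg1 : (-1 : K) ^ d = -1 := by
    rcases Int.even_or_odd d with h | h
    · have h1 := h.neg_one_zpow (α := K)
      have h2 := hinv (-1) (by simp)
      rw [h1, one_zpow] at h2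
      rw [h1, ← h2]
    · exact h.neg_one_zpow
  have hneg : ∀ x : K, (-x) ^ d = -(x ^ d) := by
    intro x
    rw [← neg_one_mul, hmul, hneg1, neg_one_mul]
  have hW : ∀ a, weilSum p K d a = ∑ x : K, wsPsi p K (x ^ d + a * x) := by
    intro a; simp only [weilSum, canon_eq]
  obtain ⟨h0, m1, m2, m3⟩ := ws_mom (wsPsi p K) (wsPsi_prim p K) (fun x : K => x ^ d) hf0 hmul hneg
    hbij (weilSum p K d) hW
  have hv : ∀ a, weilSum p K d a = 0 ∨ weilSum p K d a = A ∨ weilSum p K d a = -A := by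
    intro a
    by_cases ha : a = 0
    · left; rw [ha, h0]
    · exact (hmem _).1 ⟨a, ha, rfl⟩
  have hint : IsIntegral ℤ A := by
    rw [← hw₁, hW]; exact ws_integral p K _
  obtain ⟨r1, r2, r3, r4, r5⟩ := ws_arith p K (weilSum p K d) A hA hint h0 hv a₁ a₂ hw₁ hw₂ _ m1 m2 m3
  refine ⟨?_, r2, ?_, r4, r5⟩
  · have ht := ws_tpow p K (fun x : K => x ^ d) hmul hbij (by intro a; rw [← hW]; exact r1 a)
    obtain ⟨g, hg⟩ := IsCyclic.exists_generator (α := (ZMod p)ˣ)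
    have ho : orderOf g = p - 1 := by
      rw [orderOf_eq_card_of_forall_mem_zpowers hg, Nat.card_eq_fintype_card, ZMod.card_units]
    have h1 := ht _ (ZMod.val_coe_unit_coprime g)
    have e : ((((g : ZMod p).val : ℕ) : K)) = algebraMap (ZMod p) K (g : ZMod p) := by
      rw [← map_natCast (algebraMap (ZMod p) K), ZMod.natCast_zmod_val]
    simp only [e] at h1
    rw [← map_zpow₀] at h1
    have h2 := (algebraMap (ZMod p) K).injective h1
    have h3 : g ^ d = g := by
      apply Units.ext; rw [Units.val_zpow_eq_zpow_val]; exact h2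
    have h4 : g ^ (d - 1) = 1 := by rw [zpow_sub_one, h3, mul_inv_cancel]
    rw [← orderOf_dvd_iff_zpow_eq_one, ho, Nat.cast_sub hp.one_le] at h4
    exact (Int.modEq_iff_dvd.2 (by simpa using h4)).symm
  · rw [r3]
    congr 3
    rw [Set.ncard_eq_toFinset_card']
    congr 1
    ext x; simp
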